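/- Assume 0 < c_f < 1/(L₁ + 6) and b = (1 + c_f L₁)/2. Let Rev_j(p) = p·(1 − F_j(p)), let p_j* be a maximizer of Rev_j over [0, ∞), and set C̃ = ((1 − c_f L₁)/2)·c_f/(1 + (3/2)c_f)². Then C̃ > 0, and for every p ∈ [b, 1] with q = (p − b)/(1 − b) ∉ I_j, we have Rev_j(p_j*) − Rev_j(p) ≥ C̃·w_k^m. -/

import Mathlib

open Set MeasureTheory

/-- The basic mollifier `u₀(x) = exp(−1/(x(1/3 − x)))` on `(0, 1/3)`, `0` elsewhere. -/
noncomputable def u0 (x : ℝ) : ℝ :=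
  if x ∈ Set.Ioo (0 : ℝ) (1 / 3) then Real.exp (-(1 / (x * (1 / 3 - x)))) else 0

/-- The normalized primitive `u(x) = (∫₀^{1/3} u₀)⁻¹ · ∫_{−∞}^x u₀`. -/
noncomputable def uFn (x : ℝ) : ℝ :=
  (∫ t in (0 : ℝ)..(1 / 3), u0 t)⁻¹ * ∫ t in Set.Iic x, u0 t

/-- `L₁ = sup_x |u'(x)|`. -/
noncomputable def L1 : ℝ := ⨆ x : ℝ, |deriv uFn x|

/-- The bump function `B`. -/
noncomputable def bump (x : ℝ) : ℝ :=
  if x < 0 then 0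
  else if x ≤ 1 / 3 then uFn x
  else if x < 2 / 3 then 1
  else if x ≤ 1 then uFn (1 - x)
  else 0

/-- The bump function rescaled to the interval `[a, b]`. -/
noncomputable def bumpOn (a b x : ℝ) : ℝ := bump ((x - a) / (b - a))

/-- The interval widths: `w 0 = 1` and `w k = 3^(−k!)` for `k ≥ 1`. -/
noncomputable def wSeq : ℕ → ℝ := fun k => if k = 0 then 1 else (3 : ℝ) ^ (-(k.factorial : ℤ))

/-- `a, b : ℕ → ℝ` describe an admissible nested sequence of intervals:
`[a₀,b₀] = [0,1]` and `[a_{k+1}, b_{k+1}]` is a subinterval of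
`[a_k + w_k/3, b_k − w_k/3]` of length `w_{k+1}`. -/
def IsNestedTower (a b : ℕ → ℝ) : Prop :=
  a 0 = 0 ∧ b 0 = 1 ∧
  ∀ k : ℕ, a k + wSeq k / 3 ≤ a (k + 1) ∧ b (k + 1) ≤ b k - wSeq k / 3 ∧
    b (k + 1) - a (k + 1) = wSeq (k + 1)

/-- The bump tower `f(x) = c_f·Σ_{k=0}^∞ w_k^m·B_{[a_k,b_k]}(x)`. -/
noncomputable def towerFn (m : ℕ) (cf : ℝ) (a b : ℕ → ℝ) (x : ℝ) : ℝ :=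
  cf * ∑' k : ℕ, wSeq k ^ m * bumpOn (a k) (b k) x

/-- `g = f/(1+f)`, the normalization of a nonnegative function `f` to `[0,1)`. -/
noncomputable def gFn (f : ℝ → ℝ) (x : ℝ) : ℝ := f x / (1 + f x)

/-- The noise distribution function built from `f` with parameter `β`. -/
noncomputable def cdfF (f : ℝ → ℝ) (β : ℝ) (x : ℝ) : ℝ :=
  if x < β then 0
  else if x ≤ 1 then 1 - β / x - (1 - β) / x * gFn f ((x - β) / (1 - β))
  else if x ≤ 1 + β then 2 - (1 + β) / x
  else 1


lemma u0_nonneg (x : ℝ) : 0 ≤ u0 x := by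
  unfold u0; split_ifs <;> positivity

lemma u0_le_one (x : ℝ) : u0 x ≤ 1 := by
  unfold u0
  split_ifs with h
  · rw [Real.exp_le_one_iff]
    have := mul_pos h.1 (sub_pos.2 h.2)
    have : 0 < 1 / (x * (1 / 3 - x)) := by positivity
    linarith
  · norm_num

lemma u0_meas : Measurable u0 := by
  unfold u0
  refine Measurable.ite measurableSet_Ioo ?_ measurable_const
  fun_prop

lemma u0_eq_indicator : u0 = (Set.Ioc (0 : ℝ) (1 / 3)).indicator u0 := by
  funext x
  by_cases h : x ∈ Set.Ioc (0 : ℝ) (1 / 3)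
  · rw [Set.indicator_of_mem h]
  · rw [Set.indicator_of_notMem h]
    unfold u0
    rw [if_neg]
    intro h'
    exact h ⟨h'.1, h'.2.le⟩

lemma u0_int : Integrable u0 := by
  rw [u0_eq_indicator, integrable_indicator_iff measurableSet_Ioc]
  refine Measure.integrableOn_of_bounded (M := 1) (by simp) u0_meas.aestronglyMeasurable ?_
  refine Filter.Eventually.of_forall fun x => ?_
  rw [Real.norm_of_nonneg (u0_nonneg x)]
  exact u0_le_one x

lemma int_u0 : ∫ t in (0 : ℝ)..(1 / 3), u0 t = ∫ t, u0 t := by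
  rw [intervalIntegral.integral_of_le (by norm_num), ← integral_indicator measurableSet_Ioc,
    ← u0_eq_indicator]

lemma uFn_nonneg (x : ℝ) : 0 ≤ uFn x := by
  unfold uFn
  rw [int_u0]
  exact mul_nonneg (inv_nonneg.2 (integral_nonneg u0_nonneg)) (integral_nonneg u0_nonneg)

lemma uFn_le_one (x : ℝ) : uFn x ≤ 1 := by
  unfold uFn
  rw [int_u0]
  have h0 : 0 ≤ ∫ t, u0 t := integral_nonneg u0_nonneg
  have h1 : ∫ t in Set.Iic x, u0 t ≤ ∫ t, u0 t :=
    setIntegral_le_integral u0_int (Filter.Eventually.of_forall u0_nonneg)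
  calc _ ≤ (∫ t, u0 t)⁻¹ * ∫ t, u0 t := mul_le_mul_of_nonneg_left h1 (inv_nonneg.2 h0)
    _ ≤ 1 := inv_mul_le_one

lemma bump_nonneg (x : ℝ) : 0 ≤ bump x := by
  unfold bump; split_ifs <;> first | exact uFn_nonneg _ | norm_num

lemma bump_le_one (x : ℝ) : bump x ≤ 1 := by
  unfold bump; split_ifs <;> first | exact uFn_le_one _ | norm_num

lemma wSeq_pos (k : ℕ) : 0 < wSeq k := by
  unfold wSeq; split_ifs <;> positivity

lemma wSeq_le (k : ℕ) : wSeq k ≤ (1 / 3 : ℝ) ^ k := by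
  unfold wSeq
  split_ifs with h
  · simp [h]
  · rw [zpow_neg, zpow_natCast, one_div, inv_pow]
    exact inv_anti₀ (by positivity) (pow_le_pow_right₀ (by norm_num) (Nat.self_le_factorial k))

lemma wSeq_pow_le (m : ℕ) (hm : 1 ≤ m) (k : ℕ) : wSeq k ^ m ≤ (1 / 3 : ℝ) ^ k := by
  refine le_trans ?_ (wSeq_le k)
  refine pow_le_of_le_one (wSeq_pos k).le ((wSeq_le k).trans ?_) (by omega)
  exact pow_le_one₀ (by norm_num) (by norm_num)

lemma sum_w_le (m : ℕ) (hm : 1 ≤ m) (n : ℕ) :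
    ∑ i ∈ Finset.range n, wSeq i ^ m ≤ 3 / 2 := by
  have h : ∑ i ∈ Finset.range n, (1 / 3 : ℝ) ^ i ≤ 3 / 2 := by
    rw [geom_sum_eq (by norm_num)]
    have : (0 : ℝ) < (1 / 3) ^ n := by positivity
    rw [div_le_iff_of_neg (by norm_num)]
    linarith
  exact (Finset.sum_le_sum fun i _ => wSeq_pow_le m hm i).trans h

lemma tower_len {a b : ℕ → ℝ} (h : IsNestedTower a b) (k : ℕ) : b k - a k = wSeq k := by
  cases k with
  | zero => rw [h.1, h.2.1]; simp [wSeq]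
  | succ n => exact (h.2.2 n).2.2

lemma tower_a_mono {a b : ℕ → ℝ} (h : IsNestedTower a b) : Monotone a :=
  monotone_nat_of_le_succ fun n => by
    have := (h.2.2 n).1
    have := wSeq_pos n
    linarith

lemma tower_b_anti {a b : ℕ → ℝ} (h : IsNestedTower a b) : Antitone b :=
  antitone_nat_of_succ_le fun n => by
    have := (h.2.2 n).2.1
    have := wSeq_pos n
    linarith

lemma bumpOn_out {a b x : ℝ} (hab : a < b) (hx : x ∉ Set.Icc a b) : bumpOn a b x = 0 := by
  have hd : 0 < b - a := by linarith
  unfold bumpOn bump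
  by_cases h1 : x < a
  · rw [if_pos (div_neg_of_neg_of_pos (by linarith) hd)]
  · have h2 : b < x := by
      by_contra h2
      exact hx ⟨not_lt.1 h1, not_lt.1 h2⟩
    have h3 : 1 < (x - a) / (b - a) := by rw [lt_div_iff₀ hd]; linarith
    rw [if_neg (by linarith), if_neg (by linarith), if_neg (by linarith), if_neg (by linarith)]

lemma bumpOn_mid {a b x : ℝ} (hab : a < b) (h1 : a + (b - a) / 3 < x)
    (h2 : x < b - (b - a) / 3) : bumpOn a b x = 1 := by
  have hd : 0 < b - a := by linarith
  have h3 : 1 / 3 < (x - a) / (b - a) := by rw [lt_div_iff₀ hd]; linarith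
  have h4 : (x - a) / (b - a) < 2 / 3 := by rw [div_lt_iff₀ hd]; linarith
  unfold bumpOn bump
  rw [if_neg (by linarith), if_neg (by linarith), if_pos h4]

lemma tower_summable (m : ℕ) (hm : 1 ≤ m) (a b : ℕ → ℝ) (x : ℝ) :
    Summable fun k : ℕ => wSeq k ^ m * bumpOn (a k) (b k) x := by
  refine Summable.of_nonneg_of_le (fun k => ?_) (fun k => ?_)
    (summable_geometric_of_lt_one (r := (1 / 3 : ℝ)) (by norm_num) (by norm_num))
  · exact mul_nonneg (pow_nonneg (wSeq_pos k).le _) (bump_nonneg _)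
  · exact (mul_le_of_le_one_right (pow_nonneg (wSeq_pos k).le _) (bump_le_one _)).trans
      (wSeq_pow_le m hm k)

lemma tower_out (m : ℕ) {a b : ℕ → ℝ} (h : IsNestedTower a b) (k : ℕ)
    (x : ℝ) (hx : x ∉ Set.Icc (a k) (b k)) :
    ∑' i : ℕ, wSeq i ^ m * bumpOn (a i) (b i) x ≤ ∑ i ∈ Finset.range k, wSeq i ^ m := by
  rw [tsum_eq_sum (s := Finset.range k)]
  · exact Finset.sum_le_sum fun i _ =>
      mul_le_of_le_one_right (pow_nonneg (wSeq_pos i).le _) (bump_le_one _)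
  · intro i hi
    have hki : k ≤ i := by simpa using hi
    rw [bumpOn_out, mul_zero]
    · have := tower_len h i
      have := wSeq_pos i
      linarith
    · intro hx'
      exact hx ⟨(tower_a_mono h hki).trans hx'.1, hx'.2.trans (tower_b_anti h hki)⟩

lemma tower_in (m : ℕ) (hm : 1 ≤ m) {a b : ℕ → ℝ} (h : IsNestedTower a b) (k : ℕ)
    (x : ℝ) (hx1 : a k < x) (hx2 : x < b k) :
    ∑ i ∈ Finset.range k, wSeq i ^ m ≤ ∑' i : ℕ, wSeq i ^ m * bumpOn (a i) (b i) x := by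
  have hs := (tower_summable m hm a b x).sum_le_tsum (Finset.range k) (fun i _ =>
    mul_nonneg (pow_nonneg (wSeq_pos i).le _) (bump_nonneg _))
  refine le_trans (le_of_eq ?_) hs
  refine Finset.sum_congr rfl fun i hi => ?_
  change _ = wSeq i ^ m * bumpOn (a i) (b i) x
  have hik : i + 1 ≤ k := by simpa using hi
  have h1 := tower_a_mono h hik
  have h2 := tower_b_anti h hik
  have h3 := h.2.2 i
  have h4 := tower_len h i
  have h5 := wSeq_pos i
  rw [bumpOn_mid (by linarith) (by rw [h4]; linarith) (by rw [h4]; linarith), mul_one]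

/-- Revenue gap: if the posted price does not fall in the distinguished level-`k` cell
`I_j = [a_k, b_k]` of the instance `F_j`, the instantaneous revenue loss is at least
`C̃·w_k^m`, where `C̃ = ((1 − c_f L₁)/2)·c_f/(1 + (3/2)c_f)² > 0`. -/
theorem revenue_gap (m : ℕ) (hm : 1 ≤ m) (cf : ℝ)
    (hcf : 0 < cf) (hcf' : cf < 1 / (L1 + 6))
    (k : ℕ) (hk : 3 ≤ k)
    (a b : ℕ → ℝ) (hab : IsNestedTower a b)
    (j : ℕ) (hj1 : 1 ≤ j) (hjQ : (j : ℝ) ≤ wSeq (k - 1) / (3 * wSeq k))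
    (hak : a k = a (k - 1) + wSeq (k - 1) / 3 + ((j : ℝ) - 1) * wSeq k)
    (β : ℝ) (hβ : β = (1 + cf * L1) / 2)
    (Revj : ℝ → ℝ) (hRevj : Revj = fun p => p * (1 - cdfF (towerFn m cf a b) β p))
    (pstar : ℝ) (hpstar0 : 0 ≤ pstar) (hpstar : ∀ p : ℝ, 0 ≤ p → Revj p ≤ Revj pstar)
    (Ctil : ℝ) (hCtil : Ctil = (1 - cf * L1) / 2 * (cf / (1 + 3 / 2 * cf) ^ 2)) :
    0 < Ctil ∧
    ∀ p ∈ Set.Icc β 1, (p - β) / (1 - β) ∉ Set.Icc (a k) (b k) →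
      Ctil * wSeq k ^ m ≤ Revj pstar - Revj p := by
  have hL : 0 ≤ L1 := Real.iSup_nonneg fun x => abs_nonneg _
  have hc1 : cf * L1 < 1 := by
    rw [lt_div_iff₀ (by linarith)] at hcf'
    nlinarith
  have hcL : 0 ≤ cf * L1 := mul_nonneg hcf.le hL
  have hβ0 : 0 < β := by linarith
  have hβ1 : 0 < 1 - β := by linarith
  have hCβ : Ctil = (1 - β) * (cf / (1 + 3 / 2 * cf) ^ 2) := by
    rw [hCtil, hβ]; ring
  have hrev : ∀ p ∈ Set.Icc β 1,
      Revj p = β + (1 - β) * gFn (towerFn m cf a b) ((p - β) / (1 - β)) := by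
    intro p hp
    have hp0 : p ≠ 0 := by linarith [hp.1]
    rw [hRevj]
    simp only [cdfF]
    rw [if_neg (not_lt.2 hp.1), if_pos hp.2]
    generalize gFn (towerFn m cf a b) ((p - β) / (1 - β)) = G
    field_simp
    ring
  refine ⟨by rw [hCβ]; positivity, ?_⟩
  intro p hp hq
  obtain ⟨x, hx1, hx2⟩ : ∃ x, a (k + 1) < x ∧ x < b (k + 1) :=
    exists_between (by linarith [tower_len hab (k + 1), wSeq_pos (k + 1)])
  have hx0 : 0 < x := by
    have := tower_a_mono hab (Nat.zero_le (k + 1))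
    rw [hab.1] at this
    linarith
  have hxl : x < 1 := by
    have := tower_b_anti hab (Nat.zero_le (k + 1))
    rw [hab.2.1] at this
    linarith
  have hpx : β + (1 - β) * x ∈ Set.Icc β 1 := by
    constructor <;> nlinarith
  have hqx : (β + (1 - β) * x - β) / (1 - β) = x := by
    field_simp
    ring
  have hopt := hpstar (β + (1 - β) * x) (by linarith [hpx.1])
  rw [hrev _ hpx, hqx] at hopt
  rw [hrev p hp]
  set q := (p - β) / (1 - β) with hqdef
  have hin := mul_le_mul_of_nonneg_left (tower_in m hm hab (k + 1) x hx1 hx2) hcf.le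
  have hout := mul_le_mul_of_nonneg_left (tower_out m hab k q hq) hcf.le
  have hsum := sum_w_le m hm (k + 1)
  rw [Finset.sum_range_succ] at hin hsum
  change _ ≤ towerFn m cf a b x at hin
  change towerFn m cf a b q ≤ _ at hout
  have hq0 : 0 ≤ towerFn m cf a b q :=
    mul_nonneg hcf.le (tsum_nonneg fun i =>
      mul_nonneg (pow_nonneg (wSeq_pos i).le _) (bump_nonneg _))
  have hS0 : 0 ≤ ∑ i ∈ Finset.range k, wSeq i ^ m :=
    Finset.sum_nonneg fun i _ => pow_nonneg (wSeq_pos i).le _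
  have hW : 0 < wSeq k ^ m := pow_pos (wSeq_pos k) _
  generalize (∑ i ∈ Finset.range k, wSeq i ^ m) = S at *
  generalize wSeq k ^ m = W at *
  have hg : cf / (1 + 3 / 2 * cf) ^ 2 * W ≤
      gFn (towerFn m cf a b) x - gFn (towerFn m cf a b) q := by
    unfold gFn
    generalize towerFn m cf a b x = X at *
    generalize towerFn m cf a b q = Y at *
    have hcS : 0 ≤ cf * S := mul_nonneg hcf.le hS0
    have hcW : 0 < cf * W := mul_pos hcf hW
    have hSW : cf * (S + W) ≤ cf * (3 / 2) := mul_le_mul_of_nonneg_left hsum hcf.le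
    have hX : 0 ≤ X := by nlinarith
    have e1 : X / (1 + X) = 1 - 1 / (1 + X) := by field_simp; ring
    have e2 : Y / (1 + Y) = 1 - 1 / (1 + Y) := by field_simp; ring
    have i1 : 1 / (1 + X) ≤ 1 / (1 + cf * (S + W)) :=
      one_div_le_one_div_of_le (by nlinarith) (by linarith)
    have i2 : 1 / (1 + cf * S) ≤ 1 / (1 + Y) :=
      one_div_le_one_div_of_le (by linarith) (by linarith)
    have hp1 : 0 < 1 + cf * S := by linarith
    have hp2 : 0 < 1 + cf * (S + W) := by nlinarith
    have e3 : 1 / (1 + cf * S) - 1 / (1 + cf * (S + W)) =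
        cf * W / ((1 + cf * S) * (1 + cf * (S + W))) := by
      field_simp; ring
    have i3 : cf * W / (1 + 3 / 2 * cf) ^ 2 ≤
        cf * W / ((1 + cf * S) * (1 + cf * (S + W))) := by
      refine div_le_div_of_nonneg_left hcW.le (by positivity) ?_
      rw [sq]
      exact mul_le_mul (by linarith) (by linarith) hp2.le (by positivity)
    have e4 : cf / (1 + 3 / 2 * cf) ^ 2 * W = cf * W / (1 + 3 / 2 * cf) ^ 2 := by ring
    linarith
  have := mul_le_mul_of_nonneg_left hg hβ1.le
  rw [hCβ]
  linarith
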